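/- The function δ2(τ) = -(θ1(0,τ)^4 + θ3(0,τ)^4)/8 is a modular form of weight 2 over the congruence subgroup Γ^0(2): it is holomorphic on the upper half-plane, holomorphic at the cusps, and satisfies δ2((aτ+b)/(cτ+d)) = (cτ+d)^2 δ2(τ) for every (a b; c d) ∈ Γ^0(2). -/

import Mathlib

open Complex Real Matrix Matrix.SpecialLinearGroup

local notation "SL(2,ℤ)" => Matrix.SpecialLinearGroup (Fin 2) ℤ
local notation "ℍ" => UpperHalfPlane

/-- The nome `q = e^{2πiτ}`. -/
noncomputable def qq (τ : ℂ) : ℂ := Complex.exp (2 * π * Complex.I * τ)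

/-- The half-nome `q^{1/2} = e^{πiτ}`. -/
noncomputable def qh (τ : ℂ) : ℂ := Complex.exp (π * Complex.I * τ)

/-- The Jacobi theta constant `θ₁(0,τ) = 2 q^{1/8} ∏_{j≥1} (1-q^j)(1+q^j)^2`. -/
noncomputable def theta1 (τ : ℂ) : ℂ :=
  2 * Complex.exp (π * Complex.I * τ / 4) *
    ∏' j : ℕ, ((1 - qq τ ^ (j + 1)) * (1 + qq τ ^ (j + 1)) ^ 2)

/-- The Jacobi theta constant `θ₃(0,τ) = ∏_{j≥1} (1-q^j)(1+q^{j-1/2})^2`. -/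
noncomputable def theta3 (τ : ℂ) : ℂ :=
  ∏' j : ℕ, ((1 - qq τ ^ (j + 1)) * (1 + qh τ ^ (2 * j + 1)) ^ 2)

/-- `δ₂(τ) = -(θ₁(0,τ)⁴ + θ₃(0,τ)⁴)/8`. -/
noncomputable def delta2 (τ : ℂ) : ℂ := -(theta1 τ ^ 4 + theta3 τ ^ 4) / 8

/-- `Γ^0(N)`: the congruence subgroup of `SL(2, ℤ)` of matrices whose upper right-hand entry
reduces to zero modulo `N`. -/
def GammaUpper0 (N : ℕ) : Subgroup SL(2,ℤ) where
  carrier := { g | (g 0 1 : ZMod N) = 0 }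
  one_mem' := by simp
  mul_mem' := by
    intro a b ha hb
    simp only [Set.mem_setOf_eq]
    have h := (Matrix.two_mul_expl a.1 b.1).2.1
    simp only [coe_matrix_coe, coe_mul, Int.coe_castRingHom, map_apply, Set.mem_setOf_eq] at *
    rw [h]
    simp [ha, hb]
  inv_mem' := by
    intro a ha
    simp only [Set.mem_setOf_eq]
    rw [SL2_inv_expl a]
    simp only [cons_val_zero, cons_val_one, head_cons, coe_matrix_coe,
      coe_mk, Int.coe_castRingHom, map_apply, Int.cast_neg, neg_eq_zero, Set.mem_setOf_eq] at *
    exact ha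

/-!
For `v ∈ (ℤ/2)²` put `δ_(0,1) = δ₁`, `δ_(1,0) = δ₂`, `δ_(1,1) = δ₃`, where
`δ₁ = (θ₂⁴ + θ₃⁴)/8` and `δ₃ = (θ₁⁴ - θ₂⁴)/8`. Like a weight 2 Eisenstein series of level 2,
this family satisfies `δ_v ∣[2] γ = δ_{vγ}` for all `γ ∈ SL(2, ℤ)`. It suffices to check this for
`S` and `T`: under `τ ↦ τ + 1` the product formulas show that `θ₁⁴` changes sign and `θ₂`, `θ₃` are
swapped, and `τ ↦ -1/τ` is read off from the transformation of `η` and the eta quotients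
`θ₁ = 2 η(2τ)² / η(τ)`, `θ₂ = η(τ/2)² / η(τ)`, `θ₃ = η(τ)⁵ / (η(τ/2)² η(2τ)²)`.
Now `Γ^0(2)` is the stabiliser of `(1, 0)`, so `δ₂` is invariant under it; and every
`δ₂ ∣[2] γ` is one of `δ₁`, `δ₂`, `δ₃`, each of which has a limit at `i∞`.
-/

open Filter Topology
open UpperHalfPlane (atImInfty IsBoundedAtImInfty upperHalfPlaneSet)
open scoped ModularForm

/-! ### The Euler product -/

section EulerProduct

/-- The Euler function `∏_{n ≥ 1} (1 - xⁿ)`, through which all theta constants and `η` are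
expressed. -/
noncomputable def eulerProd (x : ℂ) : ℂ := ∏' n : ℕ, (1 - x ^ (n + 1))

lemma multipliable_one_add_mul_pow_comp {R : Type*} [NormedCommRing R] [NormOneClass R]
    [CompleteSpace R] {x : R} (hx : ‖x‖ < 1) (c : R) {f : ℕ → ℕ} (hf : f.Injective) :
    Multipliable fun n ↦ 1 + c * x ^ f n := by
  have hsum : Summable fun n ↦ ‖x ^ f n‖ :=
    (summable_norm_geometric_of_norm_lt_one hx).comp_injective hf
  exact multipliable_one_add_of_summable <|
    (hsum.mul_left ‖c‖).of_nonneg_of_le (fun _ ↦ norm_nonneg _) fun _ ↦ norm_mul_le _ _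

variable {x : ℂ}

lemma norm_sq_lt_one (hx : ‖x‖ < 1) : ‖x ^ 2‖ < 1 := by
  simpa using pow_lt_one₀ (norm_nonneg x) hx two_ne_zero

lemma multipliable_one_sub_odd_pow (hx : ‖x‖ < 1) :
    Multipliable fun n : ℕ ↦ 1 - x ^ (2 * n + 1) := by
  simpa [sub_eq_add_neg] using
    multipliable_one_add_mul_pow_comp hx (-1) (f := fun n ↦ 2 * n + 1) fun _ _ h ↦ by grind

lemma eulerProd_ne_zero (hx : ‖x‖ < 1) : eulerProd x ≠ 0 := by
  have hfactor (n : ℕ) : 1 + -x ^ (n + 1) ≠ 0 := fun h ↦ by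
    have hlt : ‖x ^ (n + 1)‖ < 1 := by simpa using pow_lt_one₀ (norm_nonneg x) hx n.succ_ne_zero
    simp [show x ^ (n + 1) = 1 by linear_combination -h] at hlt
  have hsum : Summable fun n : ℕ ↦ ‖-x ^ (n + 1)‖ := by
    simpa using (summable_nat_add_iff 1).mpr (summable_geometric_of_lt_one (norm_nonneg x) hx)
  simpa [eulerProd, sub_eq_add_neg] using tprod_one_add_ne_zero_of_summable hfactor hsum

lemma differentiableAt_eulerProd (hx : ‖x‖ < 1) : DifferentiableAt ℂ eulerProd x :=
  ModularForm.differentiableOn_tprod_one_sub_pow.differentiableAt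
    (Metric.isOpen_ball.mem_nhds (by simpa using hx))

lemma tendsto_eulerProd_zero : Tendsto eulerProd (𝓝 0) (𝓝 1) := by
  have h := (differentiableAt_eulerProd (x := 0) (by simp)).continuousAt.tendsto
  rwa [show eulerProd 0 = 1 by simp [eulerProd]] at h

lemma tprod_one_sub_odd_pow_mul_eulerProd_sq (hx : ‖x‖ < 1) :
    (∏' n : ℕ, (1 - x ^ (2 * n + 1))) * eulerProd (x ^ 2) = eulerProd x := by
  have hodd (n : ℕ) : 1 - (x ^ 2) ^ (n + 1) = 1 - x ^ (2 * n + 1 + 1) := by ring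
  have hsq := ModularForm.multipliable_one_sub_pow (norm_sq_lt_one hx)
  simp only [eulerProd, hodd] at hsq ⊢
  exact tprod_even_mul_odd (f := fun n ↦ 1 - x ^ (n + 1)) (multipliable_one_sub_odd_pow hx) hsq

lemma tprod_one_sub_odd_pow_mul_neg (hx : ‖x‖ < 1) :
    (∏' n : ℕ, (1 - x ^ (2 * n + 1))) * ∏' n : ℕ, (1 - (-x) ^ (2 * n + 1)) =
      ∏' n : ℕ, (1 - (x ^ 2) ^ (2 * n + 1)) := by
  rw [← (multipliable_one_sub_odd_pow hx).tprod_mul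
    (multipliable_one_sub_odd_pow (by simpa using hx))]
  refine tprod_congr fun n ↦ ?_
  rw [Odd.neg_pow ⟨n, rfl⟩]
  ring

lemma eulerProd_mul_eulerProd_neg_mul (hx : ‖x‖ < 1) :
    eulerProd x * eulerProd (-x) * eulerProd ((x ^ 2) ^ 2) = eulerProd (x ^ 2) ^ 3 := by
  have hpos := tprod_one_sub_odd_pow_mul_eulerProd_sq hx
  have hneg := tprod_one_sub_odd_pow_mul_eulerProd_sq (x := -x) (by simpa using hx)
  have hsq := tprod_one_sub_odd_pow_mul_eulerProd_sq (norm_sq_lt_one hx)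
  rw [neg_sq] at hneg
  calc eulerProd x * eulerProd (-x) * eulerProd ((x ^ 2) ^ 2)
    _ = (∏' n : ℕ, (1 - x ^ (2 * n + 1))) * (∏' n : ℕ, (1 - (-x) ^ (2 * n + 1))) *
        eulerProd ((x ^ 2) ^ 2) * eulerProd (x ^ 2) ^ 2 := by
      rw [← hpos, ← hneg]
      ring
    _ = eulerProd (x ^ 2) ^ 3 := by
      rw [tprod_one_sub_odd_pow_mul_neg hx, hsq]
      ring

lemma tprod_one_sub_pow_mul_one_add_pow_sq (hx : ‖x‖ < 1) :
    ∏' j : ℕ, ((1 - x ^ (j + 1)) * (1 + x ^ (j + 1)) ^ 2) =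
      eulerProd (x ^ 2) ^ 2 / eulerProd x := by
  have hsub := ModularForm.multipliable_one_sub_pow hx
  have hadd : Multipliable fun n : ℕ ↦ 1 + x ^ (n + 1) := by
    simpa using multipliable_one_add_mul_pow_comp hx 1 (add_left_injective 1)
  rw [eq_div_iff (eulerProd_ne_zero hx), eulerProd, eulerProd,
    ← (hsub.mul (hadd.pow 2)).tprod_mul hsub,
    ← (ModularForm.multipliable_one_sub_pow (norm_sq_lt_one hx)).tprod_pow]
  exact tprod_congr fun n ↦ by ring

lemma tprod_one_sub_sq_pow_mul_one_sub_odd_pow_sq (hx : ‖x‖ < 1) :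
    ∏' j : ℕ, ((1 - (x ^ 2) ^ (j + 1)) * (1 - x ^ (2 * j + 1)) ^ 2) =
      eulerProd x ^ 2 / eulerProd (x ^ 2) := by
  have hodd := multipliable_one_sub_odd_pow hx
  rw [eq_div_iff (eulerProd_ne_zero (norm_sq_lt_one hx)),
    (ModularForm.multipliable_one_sub_pow (norm_sq_lt_one hx)).tprod_mul (hodd.pow 2),
    hodd.tprod_pow, ← tprod_one_sub_odd_pow_mul_eulerProd_sq hx, eulerProd]
  ring

end EulerProduct

/-! ### Theta constants as eta quotients -/

section EtaQuotients

/-- The Jacobi theta constant `θ₂(0,τ) = ∏_{j≥1} (1-q^j)(1-q^{j-1/2})^2`. -/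
noncomputable def theta2 (τ : ℂ) : ℂ :=
  ∏' j : ℕ, ((1 - qq τ ^ (j + 1)) * (1 - qh τ ^ (2 * j + 1)) ^ 2)

lemma qh_sq (τ : ℂ) : qh τ ^ 2 = qq τ := by
  rw [qh, qq, ← Complex.exp_nat_mul]
  push_cast
  ring_nf

lemma qq_two_mul (τ : ℂ) : qq (2 * τ) = qq τ ^ 2 := by
  rw [qq, qq, ← Complex.exp_nat_mul]
  push_cast
  ring_nf

lemma qq_div_two (τ : ℂ) : qq (τ / 2) = qh τ := by
  rw [qq, qh]
  ring_nf

lemma eta_eq_exp_mul_eulerProd (τ : ℂ) : η τ = Complex.exp (π * I * τ / 12) * eulerProd (qq τ) := by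
  simp only [ModularForm.eta, ModularForm.eta_q_eq_pow, Function.Periodic.qParam, eulerProd, qq]
  push_cast
  ring_nf

variable {τ : ℂ}

lemma norm_qh_lt_one (hτ : 0 < τ.im) : ‖qh τ‖ < 1 := by
  rw [qh, Complex.norm_exp, Real.exp_lt_one_iff]
  simpa using mul_pos Real.pi_pos hτ

lemma norm_qq_lt_one (hτ : 0 < τ.im) : ‖qq τ‖ < 1 :=
  qh_sq τ ▸ norm_sq_lt_one (norm_qh_lt_one hτ)

lemma theta1_eq_eulerProd_div (hτ : 0 < τ.im) :
    theta1 τ = 2 * Complex.exp (π * I * τ / 4) * (eulerProd (qq τ ^ 2) ^ 2 / eulerProd (qq τ)) := by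
  rw [theta1, tprod_one_sub_pow_mul_one_add_pow_sq (norm_qq_lt_one hτ)]

lemma theta2_eq_eulerProd_div (hτ : 0 < τ.im) :
    theta2 τ = eulerProd (qh τ) ^ 2 / eulerProd (qq τ) := by
  rw [theta2, ← qh_sq, tprod_one_sub_sq_pow_mul_one_sub_odd_pow_sq (norm_qh_lt_one hτ)]

lemma theta3_eq_eulerProd_div (hτ : 0 < τ.im) :
    theta3 τ = eulerProd (-qh τ) ^ 2 / eulerProd (qq τ) := by
  have h := tprod_one_sub_sq_pow_mul_one_sub_odd_pow_sq (x := -qh τ)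
    (by simpa using norm_qh_lt_one hτ)
  rw [neg_sq, qh_sq] at h
  rw [theta3, ← h]
  refine tprod_congr fun j ↦ ?_
  rw [Odd.neg_pow ⟨j, rfl⟩, sub_neg_eq_add]

lemma theta1_eq_eta_div (hτ : 0 < τ.im) : theta1 τ = 2 * η (2 * τ) ^ 2 / η τ := by
  have hexp : Complex.exp (π * I * (2 * τ) / 12) ^ 2 =
      Complex.exp (π * I * τ / 4) * Complex.exp (π * I * τ / 12) := by
    rw [← Complex.exp_nat_mul, ← Complex.exp_add]
    push_cast
    ring_nf
  have := eulerProd_ne_zero (norm_qq_lt_one hτ)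
  rw [theta1_eq_eulerProd_div hτ, eta_eq_exp_mul_eulerProd, eta_eq_exp_mul_eulerProd, qq_two_mul,
    mul_pow, hexp]
  field_simp

lemma theta2_eq_eta_div (hτ : 0 < τ.im) : theta2 τ = η (τ / 2) ^ 2 / η τ := by
  have hexp : Complex.exp (π * I * (τ / 2) / 12) ^ 2 = Complex.exp (π * I * τ / 12) := by
    rw [← Complex.exp_nat_mul]
    push_cast
    ring_nf
  have := eulerProd_ne_zero (norm_qq_lt_one hτ)
  rw [theta2_eq_eulerProd_div hτ, eta_eq_exp_mul_eulerProd, eta_eq_exp_mul_eulerProd, qq_div_two,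
    mul_pow, hexp]
  field_simp

lemma eta_div_two_ne_zero (hτ : 0 < τ.im) : η (τ / 2) ≠ 0 :=
  ModularForm.eta_ne_zero (by simpa using hτ)

lemma eta_two_mul_ne_zero (hτ : 0 < τ.im) : η (2 * τ) ≠ 0 :=
  ModularForm.eta_ne_zero (by simpa using hτ)

lemma theta1_mul_theta2_mul_theta3 (hτ : 0 < τ.im) :
    theta1 τ * theta2 τ * theta3 τ = 2 * η τ ^ 3 := by
  have hexp : Complex.exp (π * I * τ / 12) ^ 3 = Complex.exp (π * I * τ / 4) := by
    rw [← Complex.exp_nat_mul]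
    push_cast
    ring_nf
  have hprod := eulerProd_mul_eulerProd_neg_mul (norm_qh_lt_one hτ)
  rw [qh_sq] at hprod
  have := eulerProd_ne_zero (norm_qq_lt_one hτ)
  calc theta1 τ * theta2 τ * theta3 τ
    _ = 2 * Complex.exp (π * I * τ / 4) *
        ((eulerProd (qh τ) * eulerProd (-qh τ) * eulerProd (qq τ ^ 2)) ^ 2 /
          eulerProd (qq τ) ^ 3) := by
      rw [theta1_eq_eulerProd_div hτ, theta2_eq_eulerProd_div hτ, theta3_eq_eulerProd_div hτ]
      field_simp
    _ = 2 * η τ ^ 3 := by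
      rw [hprod, eta_eq_exp_mul_eulerProd, mul_pow, hexp]
      field_simp

lemma theta3_eq_eta_div (hτ : 0 < τ.im) :
    theta3 τ = η τ ^ 5 / (η (τ / 2) ^ 2 * η (2 * τ) ^ 2) := by
  have hprod := theta1_mul_theta2_mul_theta3 hτ
  rw [theta1_eq_eta_div hτ, theta2_eq_eta_div hτ] at hprod
  have := ModularForm.eta_ne_zero hτ
  have := eta_div_two_ne_zero hτ
  have := eta_two_mul_ne_zero hτ
  field_simp at hprod ⊢
  linear_combination hprod

lemma differentiableOn_theta1 : DifferentiableOn ℂ theta1 upperHalfPlaneSet := by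
  refine DifferentiableOn.congr (fun z hz ↦ ?_) fun z hz ↦ theta1_eq_eta_div hz
  have hη := ModularForm.differentiableAt_eta_of_mem_upperHalfPlaneSet hz
  have hη₂ : DifferentiableAt ℂ (fun w ↦ η (2 * w)) z :=
    (ModularForm.differentiableAt_eta_of_mem_upperHalfPlaneSet (z := 2 * z)
      (by simpa using hz)).comp z (by fun_prop)
  exact (((hη₂.pow 2).const_mul 2).div hη (ModularForm.eta_ne_zero hz)).differentiableWithinAt

lemma differentiableOn_theta3 : DifferentiableOn ℂ theta3 upperHalfPlaneSet := by
  refine DifferentiableOn.congr (fun z hz ↦ ?_) fun z hz ↦ theta3_eq_eulerProd_div hz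
  have hqq : DifferentiableAt ℂ qq z := by unfold qq; fun_prop
  have hqh : DifferentiableAt ℂ qh z := by unfold qh; fun_prop
  have hq : DifferentiableAt ℂ (fun w ↦ eulerProd (qq w)) z :=
    (differentiableAt_eulerProd (norm_qq_lt_one hz)).comp z hqq
  have hh : DifferentiableAt ℂ (fun w ↦ eulerProd (-qh w)) z :=
    DifferentiableAt.comp z (g := eulerProd)
      (differentiableAt_eulerProd (by simpa using norm_qh_lt_one hz)) hqh.neg
  exact ((hh.pow 2).div hq (eulerProd_ne_zero (norm_qq_lt_one hz))).differentiableWithinAt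

end EtaQuotients

/-! ### Transformation under `τ ↦ τ + 1` and `τ ↦ -1/τ` -/

section Transformations

lemma qh_add_one (τ : ℂ) : qh (τ + 1) = -qh τ := by
  rw [qh, qh, mul_add, mul_one, Complex.exp_add, Complex.exp_pi_mul_I, mul_neg_one]

lemma qq_add_one (τ : ℂ) : qq (τ + 1) = qq τ := by
  rw [← qh_sq, qh_add_one, neg_sq, qh_sq]

lemma theta1_add_one_pow_four (τ : ℂ) : theta1 (τ + 1) ^ 4 = -theta1 τ ^ 4 := by
  have hexp (z : ℂ) : Complex.exp (π * I * z / 4) ^ 4 = qh z := by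
    rw [← Complex.exp_nat_mul, qh]
    push_cast
    ring_nf
  simp only [theta1, qq_add_one, mul_pow, hexp, qh_add_one]
  ring

lemma theta2_add_one (τ : ℂ) : theta2 (τ + 1) = theta3 τ := by
  simp only [theta2, theta3, qq_add_one, qh_add_one]
  exact tprod_congr fun j ↦ by rw [Odd.neg_pow ⟨j, rfl⟩, sub_neg_eq_add]

lemma theta3_add_one (τ : ℂ) : theta3 (τ + 1) = theta2 τ := by
  simp only [theta2, theta3, qq_add_one, qh_add_one]
  exact tprod_congr fun j ↦ by rw [Odd.neg_pow ⟨j, rfl⟩, ← sub_eq_add_neg]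

variable {τ : ℂ}

lemma im_neg_one_div_pos (hτ : 0 < τ.im) : 0 < (-1 / τ).im := by
  simpa [neg_div] using UpperHalfPlane.im_inv_neg_coe_pos ⟨τ, hτ⟩

lemma eta_neg_one_div_sq (hτ : 0 < τ.im) : η (-1 / τ) ^ 2 = -I * τ * η τ ^ 2 := by
  have hsqrt (z : ℂ) : Complex.sqrt z ^ 2 = z := Complex.cpow_ofNat_inv_pow z 2
  have h : η (-1 / τ) = (Complex.sqrt I)⁻¹ * (Complex.sqrt τ * η τ) :=
    ModularForm.eta_comp_eq_csqrt_I_inv hτ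
  rw [h, mul_pow, mul_pow, inv_pow, hsqrt, hsqrt, Complex.inv_I, mul_assoc]

lemma eta_two_mul_neg_one_div_sq (hτ : 0 < τ.im) :
    η (2 * (-1 / τ)) ^ 2 = -I * (τ / 2) * η (τ / 2) ^ 2 := by
  rw [← eta_neg_one_div_sq (by simpa using hτ), div_div_eq_mul_div]
  ring_nf

lemma eta_neg_one_div_div_two_sq (hτ : 0 < τ.im) :
    η (-1 / τ / 2) ^ 2 = -I * (2 * τ) * η (2 * τ) ^ 2 := by
  rw [← eta_neg_one_div_sq (by simpa using hτ), div_div, mul_comm τ]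

lemma theta1_neg_one_div_pow_four (hτ : 0 < τ.im) :
    theta1 (-1 / τ) ^ 4 = -τ ^ 2 * theta2 τ ^ 4 := by
  have hτ₀ : τ ≠ 0 := UpperHalfPlane.ne_zero ⟨τ, hτ⟩
  have := ModularForm.eta_ne_zero hτ
  calc theta1 (-1 / τ) ^ 4
    _ = 16 * (η (2 * (-1 / τ)) ^ 2) ^ 4 / (η (-1 / τ) ^ 2) ^ 2 := by
      rw [theta1_eq_eta_div (im_neg_one_div_pos hτ)]
      ring
    _ = -τ ^ 2 * theta2 τ ^ 4 := by
      rw [eta_two_mul_neg_one_div_sq hτ, eta_neg_one_div_sq hτ, theta2_eq_eta_div hτ]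
      field_simp
      grind [I_sq]

lemma theta2_neg_one_div_pow_four (hτ : 0 < τ.im) :
    theta2 (-1 / τ) ^ 4 = -τ ^ 2 * theta1 τ ^ 4 := by
  have hτ₀ : τ ≠ 0 := UpperHalfPlane.ne_zero ⟨τ, hτ⟩
  have h := theta1_neg_one_div_pow_four (im_neg_one_div_pos hτ)
  rw [show -1 / (-1 / τ) = τ by field_simp] at h
  rw [h]
  field_simp

lemma theta3_neg_one_div_pow_four (hτ : 0 < τ.im) :
    theta3 (-1 / τ) ^ 4 = -τ ^ 2 * theta3 τ ^ 4 := by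
  have hτ₀ : τ ≠ 0 := UpperHalfPlane.ne_zero ⟨τ, hτ⟩
  have := eta_div_two_ne_zero hτ
  have := eta_two_mul_ne_zero hτ
  calc theta3 (-1 / τ) ^ 4
    _ = (η (-1 / τ) ^ 2) ^ 10 / ((η (-1 / τ / 2) ^ 2) ^ 4 * (η (2 * (-1 / τ)) ^ 2) ^ 4) := by
      rw [theta3_eq_eta_div (im_neg_one_div_pos hτ)]
      ring
    _ = -τ ^ 2 * theta3 τ ^ 4 := by
      rw [eta_two_mul_neg_one_div_sq hτ, eta_neg_one_div_div_two_sq hτ, eta_neg_one_div_sq hτ,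
        theta3_eq_eta_div hτ]
      field_simp
      grind [I_sq]

end Transformations

/-! ### Limits at `i∞` -/

section Limits

lemma tendsto_qh_atImInfty : Tendsto (fun τ : ℍ ↦ qh τ) atImInfty (𝓝 0) := by
  refine (UpperHalfPlane.qParam_tendsto_atImInfty two_pos).congr fun τ ↦ ?_
  rw [Function.Periodic.qParam, qh]
  push_cast
  ring_nf

lemma tendsto_qq_atImInfty : Tendsto (fun τ : ℍ ↦ qq τ) atImInfty (𝓝 0) := by
  simpa [qh_sq] using tendsto_qh_atImInfty.pow 2

lemma tendsto_theta1_atImInfty : Tendsto (fun τ : ℍ ↦ theta1 τ) atImInfty (𝓝 0) := by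
  have hexp : Tendsto (fun τ : ℍ ↦ Complex.exp (π * I * τ / 4)) atImInfty (𝓝 0) := by
    refine (UpperHalfPlane.qParam_tendsto_atImInfty (h := 8) (by norm_num)).congr fun τ ↦ ?_
    rw [Function.Periodic.qParam]
    push_cast
    ring_nf
  have hsq : Tendsto (fun τ : ℍ ↦ eulerProd (qq τ ^ 2)) atImInfty (𝓝 1) :=
    tendsto_eulerProd_zero.comp (by simpa using tendsto_qq_atImInfty.pow 2)
  have hlim := (hexp.const_mul 2).mul ((hsq.pow 2).div
    (tendsto_eulerProd_zero.comp tendsto_qq_atImInfty) one_ne_zero)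
  simp only [mul_zero, zero_mul] at hlim
  exact hlim.congr fun τ ↦ (theta1_eq_eulerProd_div τ.im_pos).symm

lemma tendsto_theta2_atImInfty : Tendsto (fun τ : ℍ ↦ theta2 τ) atImInfty (𝓝 1) := by
  have hlim := ((tendsto_eulerProd_zero.comp tendsto_qh_atImInfty).pow 2).div
    (tendsto_eulerProd_zero.comp tendsto_qq_atImInfty) one_ne_zero
  simp only [one_pow, div_one] at hlim
  exact hlim.congr fun τ ↦ (theta2_eq_eulerProd_div τ.im_pos).symm

lemma tendsto_theta3_atImInfty : Tendsto (fun τ : ℍ ↦ theta3 τ) atImInfty (𝓝 1) := by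
  have hneg : Tendsto (fun τ : ℍ ↦ eulerProd (-qh τ)) atImInfty (𝓝 1) :=
    tendsto_eulerProd_zero.comp (by simpa using tendsto_qh_atImInfty.neg)
  have hlim := (hneg.pow 2).div (tendsto_eulerProd_zero.comp tendsto_qq_atImInfty) one_ne_zero
  simp only [one_pow, div_one] at hlim
  exact hlim.congr fun τ ↦ (theta3_eq_eulerProd_div τ.im_pos).symm

end Limits

/-! ### The family `δ_v` -/

section DeltaFamily

/-- `δ₁(τ) = (θ₂(0,τ)⁴ + θ₃(0,τ)⁴)/8`, the transform of `δ₂` under `τ ↦ -1/τ`. -/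
noncomputable def delta1 (τ : ℂ) : ℂ := (theta2 τ ^ 4 + theta3 τ ^ 4) / 8

/-- `δ₃(τ) = (θ₁(0,τ)⁴ - θ₂(0,τ)⁴)/8`, the transform of `δ₂` under `τ ↦ τ + 1`. -/
noncomputable def delta3 (τ : ℂ) : ℂ := (theta1 τ ^ 4 - theta2 τ ^ 4) / 8

/-- The functions `δ₁`, `δ₂`, `δ₃` indexed by the nonzero row vectors `(0,1)`, `(1,0)`, `(1,1)` of
`(ℤ/2)²`, so that `SL(2, ℤ)` permutes them through right multiplication of the index. The value at
`v = 0` is the convention `0`. -/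
noncomputable def deltaVec (v : Fin 2 → ZMod 2) (τ : ℍ) : ℂ :=
  match v 0, v 1 with
  | 0, 0 => 0
  | 0, 1 => delta1 τ
  | 1, 0 => delta2 τ
  | 1, 1 => delta3 τ

lemma delta1_add_one (τ : ℂ) : delta1 (τ + 1) = delta1 τ := by
  rw [delta1, theta2_add_one, theta3_add_one, add_comm, delta1]

lemma delta2_add_one (τ : ℂ) : delta2 (τ + 1) = delta3 τ := by
  rw [delta2, theta1_add_one_pow_four, theta3_add_one, delta3]
  ring

lemma delta3_add_one (τ : ℂ) : delta3 (τ + 1) = delta2 τ := by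
  rw [delta3, theta1_add_one_pow_four, theta2_add_one, delta2]
  ring

lemma delta1_neg_one_div {τ : ℂ} (hτ : 0 < τ.im) : delta1 (-1 / τ) = τ ^ 2 * delta2 τ := by
  rw [delta1, theta2_neg_one_div_pow_four hτ, theta3_neg_one_div_pow_four hτ, delta2]
  ring

lemma delta2_neg_one_div {τ : ℂ} (hτ : 0 < τ.im) : delta2 (-1 / τ) = τ ^ 2 * delta1 τ := by
  rw [delta2, theta1_neg_one_div_pow_four hτ, theta3_neg_one_div_pow_four hτ, delta1]
  ring

lemma delta3_neg_one_div {τ : ℂ} (hτ : 0 < τ.im) : delta3 (-1 / τ) = τ ^ 2 * delta3 τ := by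
  rw [delta3, theta1_neg_one_div_pow_four hτ, theta2_neg_one_div_pow_four hτ, delta3]
  ring

lemma slash_T_apply (f : ℍ → ℂ) (k : ℤ) (τ : ℍ) :
    (f ∣[k] ModularGroup.T) τ = f ((1 : ℝ) +ᵥ τ) := by
  rw [ModularForm.SL_slash_apply, UpperHalfPlane.modular_T_smul, ModularGroup.denom_apply]
  simp [ModularGroup.T]

theorem slash_eq_vecMul_of_slash_S_of_slash_T {R β α : Type*} [CommRing R] [AddMonoid α]
    [SlashAction β SL(2,ℤ) α] {k : β} {φ : (Fin 2 → R) → α}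
    (hS : ∀ v, φ v ∣[k] ModularGroup.S = φ (v ᵥ* (ModularGroup.S : SL(2,ℤ))))
    (hT : ∀ v, φ v ∣[k] ModularGroup.T = φ (v ᵥ* (ModularGroup.T : SL(2,ℤ))))
    (v : Fin 2 → R) (γ : SL(2,ℤ)) : φ v ∣[k] γ = φ (v ᵥ* γ) := by
  have hγ : γ ∈ Subgroup.closure {ModularGroup.S, ModularGroup.T} := by
    simp [SpecialLinearGroup.SL2Z_generators]
  induction hγ using Subgroup.closure_induction generalizing v with
  | mem γ hγ =>
    rcases hγ with rfl | rfl
    exacts [hS v, hT v]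
  | one => simp
  | mul γ γ' _ _ hγ hγ' =>
    rw [SlashAction.slash_mul, hγ, hγ']
    simp
  | inv γ _ hγ =>
    have hinv : v ᵥ* (γ⁻¹ : SL(2,ℤ)) ᵥ*
        ((γ : SpecialLinearGroup (Fin 2) R) : Matrix (Fin 2) (Fin 2) R) = v := by
      rw [vecMul_vecMul, ← Matrix.SpecialLinearGroup.coe_mul, ← map_mul, inv_mul_cancel]
      simp
    rw [← hinv, ← hγ, ← SlashAction.slash_mul, mul_inv_cancel, SlashAction.slash_one, hinv]

lemma deltaVec_slash_S (v : Fin 2 → ZMod 2) :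
    deltaVec v ∣[(2 : ℤ)] ModularGroup.S = deltaVec (v ᵥ* (ModularGroup.S : SL(2,ℤ))) := by
  ext τ
  have hindex : v ᵥ* (ModularGroup.S : SL(2,ℤ)) = ![v 1, v 0] := by
    ext i
    fin_cases i <;> simp [vecMul, dotProduct, ModularGroup.coe_S, -map_apply]
  have hτ : (τ : ℂ) ≠ 0 := τ.ne_zero
  have hinv : (-(τ : ℂ))⁻¹ = -1 / τ := by simp [neg_div, inv_neg]
  rw [SlashInvariantForm.slash_S_apply, hindex, _root_.zpow_neg,
    mul_inv_eq_iff_eq_mul₀ (zpow_ne_zero 2 hτ), mul_comm]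
  simp only [deltaVec, hinv]
  generalize v 0 = a
  generalize v 1 = b
  fin_cases a <;> fin_cases b
  exacts [(mul_zero _).symm, delta1_neg_one_div τ.im_pos, delta2_neg_one_div τ.im_pos,
    delta3_neg_one_div τ.im_pos]

lemma deltaVec_slash_T (v : Fin 2 → ZMod 2) :
    deltaVec v ∣[(2 : ℤ)] ModularGroup.T = deltaVec (v ᵥ* (ModularGroup.T : SL(2,ℤ))) := by
  ext τ
  have hindex : v ᵥ* (ModularGroup.T : SL(2,ℤ)) = ![v 0, v 0 + v 1] := by
    ext i
    fin_cases i <;> simp [vecMul, dotProduct, ModularGroup.coe_T, -map_apply]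
  have hvadd : (((1 : ℝ) +ᵥ τ : ℍ) : ℂ) = τ + 1 := by
    rw [UpperHalfPlane.coe_vadd, ofReal_one, add_comm]
  rw [slash_T_apply, hindex]
  simp only [deltaVec, hvadd, delta1_add_one, delta2_add_one, delta3_add_one]
  generalize v 0 = a
  generalize v 1 = b
  fin_cases a <;> fin_cases b <;> rfl

theorem deltaVec_slash (v : Fin 2 → ZMod 2) (γ : SL(2,ℤ)) :
    deltaVec v ∣[(2 : ℤ)] γ = deltaVec (v ᵥ* γ) :=
  slash_eq_vecMul_of_slash_S_of_slash_T deltaVec_slash_S deltaVec_slash_T v γ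

lemma isBoundedAtImInfty_deltaVec (v : Fin 2 → ZMod 2) : IsBoundedAtImInfty (deltaVec v) := by
  have h₁ := tendsto_theta1_atImInfty.pow 4
  have h₂ := tendsto_theta2_atImInfty.pow 4
  have h₃ := tendsto_theta3_atImInfty.pow 4
  unfold deltaVec
  split
  · exact Filter.const_boundedAtFilter _ (0 : ℂ)
  · exact ((h₂.add h₃).div_const 8).isBigO_one ℝ
  · exact ((h₁.add h₃).neg.div_const 8).isBigO_one ℝ
  · exact ((h₁.sub h₂).div_const 8).isBigO_one ℝ

lemma differentiableOn_delta2 : DifferentiableOn ℂ delta2 upperHalfPlaneSet :=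
  ((differentiableOn_theta1.pow 4).add (differentiableOn_theta3.pow 4)).neg.div_const 8

end DeltaFamily

lemma mem_GammaUpper0_two_iff_vecMul {γ : SL(2,ℤ)} :
    γ ∈ GammaUpper0 2 ↔ ![(1 : ZMod 2), 0] ᵥ* γ = ![1, 0] := by
  have hmem : γ ∈ GammaUpper0 2 ↔ ((γ 0 1 : ℤ) : ZMod 2) = 0 := Iff.rfl
  have hrow : ![(1 : ZMod 2), 0] ᵥ* γ = ![((γ 0 0 : ℤ) : ZMod 2), ((γ 0 1 : ℤ) : ZMod 2)] := by
    ext i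
    fin_cases i <;> simp [vecMul, dotProduct]
  rw [hmem, hrow]
  refine ⟨fun hb ↦ ?_, fun h ↦ by simpa using congrFun h 1⟩
  have hdet : ((γ 0 0 : ℤ) : ZMod 2) * (γ 1 1 : ℤ) = 1 := by
    have h := congrArg (Int.cast : ℤ → ZMod 2) γ.det_coe
    rw [Matrix.det_fin_two] at h
    push_cast at h
    simpa [hb] using h
  rw [hb, isUnit_iff_eq_one.mp (.of_mul_eq_one _ hdet)]

/-- `δ₂` is a modular form of weight `2` over `Γ^0(2)`: there is a modular form of weight `2`
over `Γ^0(2)` (holomorphic on `ℍ`, holomorphic at the cusps, transforming with weight `2` under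
`Γ^0(2)`) that coincides with `δ₂` on the upper half-plane. -/
theorem delta2_modular_form_weight_two_GammaUpper0_two :
    ∃ F : ModularForm (GammaUpper0 2) 2, ∀ τ : ℍ, F τ = delta2 (τ : ℂ) := by
  refine ⟨{ toFun := deltaVec ![1, 0]
            slash_action_eq' := ?invariant
            holo' := ?holomorphic
            bdd_at_cusps' := ?bounded }, fun τ ↦ rfl⟩
  case invariant =>
    rintro _ ⟨γ, hγ, rfl⟩
    exact (deltaVec_slash _ γ).trans <| congrArg deltaVec (mem_GammaUpper0_two_iff_vecMul.mp hγ)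
  case holomorphic =>
    rw [UpperHalfPlane.mdifferentiable_iff]
    refine differentiableOn_delta2.congr fun z hz ↦ ?_
    simp [UpperHalfPlane.ofComplex_apply_of_im_pos hz, deltaVec]
  case bounded =>
    intro c hc
    have hc' : IsCusp c (mapGL ℝ : SL(2,ℤ) →* _).range :=
      hc.mono (Subgroup.map_le_range _ _)
    rw [OnePoint.isBoundedAt_iff_forall_SL2Z hc']
    exact fun γ _ ↦ deltaVec_slash _ γ ▸ isBoundedAtImInfty_deltaVec _
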